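/- arXiv:2205.01921 — 5 statements merged into one kernel-verified Lean document; each statement's English description precedes it below -/
import Mathlib

section
/- Lemma (least-squares residual bound). Let a ≤ b be integers with ℓ = b − a + 1 ≥ 6, and let u_a,…,u_b be real numbers. For t ∈ [a,b] let x_t = [1, t − a + 1]ᵀ ∈ ℝ², let X ∈ ℝ^{ℓ×2} be the matrix whose rows are x_a,…,x_b, and let β = (XᵀX)^{−1} Xᵀ u_{a:b} be the least-squares coefficient fitting labels u_t against covariates x_t. Then for every t ∈ [a,b], |βᵀ x_t − u_t| ≤ 20 · ℓ · ‖D² u_{a:b}‖₁. -/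
/-- Covariate `x_t = [1, t - a + 1]ᵀ` for an interval starting at `a`. -/
noncomputable def xv (a t : ℕ) : Fin 2 → ℝ := ![1, (t : ℝ) - (a : ℝ) + 1]

/-- `‖D² u_{a:b}‖₁` of the subsequence `u_a, …, u_b`. -/
noncomputable def tv2 (u : ℕ → ℝ) (a b : ℕ) : ℝ :=
  ∑ t ∈ Finset.Icc a (b - 2), |u (t + 2) - 2 * u (t + 1) + u t|

open Finset in
/-- Twice the unnormalized covariance of `f` and `g` over `S`, as a sum over pairs. -/
theorem sum_sum_sub_mul_sub (S : Finset ℕ) (f g : ℕ → ℝ) :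
    ∑ i ∈ S, ∑ j ∈ S, (f i - f j) * (g i - g j) =
      2 * ((#S : ℝ) * ∑ i ∈ S, f i * g i - (∑ i ∈ S, f i) * ∑ i ∈ S, g i) := by
  have expand : ∀ i j, (f i - f j) * (g i - g j) =
      f i * g i - f i * g j - f j * g i + f j * g j := fun i j => by ring
  simp only [expand, sum_add_distrib, sum_sub_distrib, sum_const, nsmul_eq_mul, ← mul_sum,
    ← sum_mul]
  ring

/-- Strictly comonotone sequences on an interval have positive covariance. -/
theorem sum_sum_sub_mul_sub_pos {a b : ℕ} (hab : a < b) {f g : ℕ → ℝ}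
    (hf : StrictMonoOn f (Set.Icc a b)) (hg : StrictMonoOn g (Set.Icc a b)) :
    0 < ∑ i ∈ Finset.Icc a b, ∑ j ∈ Finset.Icc a b, (f i - f j) * (g i - g j) := by
  have nonneg : ∀ i ∈ Finset.Icc a b, ∀ j ∈ Finset.Icc a b,
      0 ≤ (f i - f j) * (g i - g j) := by
    intro i hi j hj
    rw [Finset.mem_Icc] at hi hj
    rcases le_total i j with h | h
    · exact mul_nonneg_of_nonpos_of_nonpos (sub_nonpos.2 (hf.monotoneOn hi hj h))
        (sub_nonpos.2 (hg.monotoneOn hi hj h))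
    · exact mul_nonneg (sub_nonneg.2 (hf.monotoneOn hj hi h))
        (sub_nonneg.2 (hg.monotoneOn hj hi h))
  have ha : a ∈ Finset.Icc a b := Finset.left_mem_Icc.2 hab.le
  have hb : b ∈ Finset.Icc a b := Finset.right_mem_Icc.2 hab.le
  refine Finset.sum_pos' (fun i hi => Finset.sum_nonneg (nonneg i hi)) ⟨b, hb, ?_⟩
  refine Finset.sum_pos' (nonneg b hb) ⟨a, ha, ?_⟩
  rw [Finset.mem_Icc] at ha hb
  exact mul_pos (sub_pos.2 (hf ha hb hab)) (sub_pos.2 (hg ha hb hab))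

/-- A sequence orthogonal to all affine sequences is not strictly increasing. -/
theorem exists_succ_sub_nonpos_of_orthogonal {a b : ℕ} (hab : a < b) (e : ℕ → ℝ)
    (h0 : ∑ s ∈ Finset.Icc a b, e s = 0) (h1 : ∑ s ∈ Finset.Icc a b, (s : ℝ) * e s = 0) :
    ∃ i ∈ Finset.Ico a b, e (i + 1) - e i ≤ 0 := by
  by_contra! h
  have mono : StrictMonoOn e (Set.Icc a b) := by
    refine strictMonoOn_of_lt_succ Set.ordConnected_Icc fun i _ hi hi' => ?_
    rw [Nat.succ_eq_succ] at hi' ⊢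
    exact sub_pos.1 (h i (Finset.mem_Ico.2 ⟨hi.1, hi'.2⟩))
  have pos := sum_sum_sub_mul_sub_pos hab
    ((Nat.strictMono_cast (α := ℝ)).strictMonoOn _) mono
  rw [sum_sum_sub_mul_sub, h0, h1] at pos
  simp at pos

theorem abs_sub_le_sum_abs_sub (f : ℕ → ℝ) {m n a b : ℕ} (hm : m ∈ Set.Icc a b)
    (hn : n ∈ Set.Icc a b) :
    |f m - f n| ≤ ∑ t ∈ Finset.Ico a b, |f (t + 1) - f t| := by
  wlog hmn : m ≤ n generalizing m n
  · rw [abs_sub_comm]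
    exact this hn hm (le_of_not_ge hmn)
  have h := dist_le_Ico_sum_dist f hmn
  simp only [Real.dist_eq] at h
  refine h.trans ((Finset.sum_le_sum_of_subset_of_nonneg
    (Finset.Ico_subset_Ico hm.1 hn.2) fun _ _ _ => abs_nonneg _).trans_eq ?_)
  exact Finset.sum_congr rfl fun _ _ => abs_sub_comm _ _

theorem abs_slope_sub_slope_le_tv2 (e : ℕ → ℝ) {a b i j : ℕ}
    (hi : i ∈ Finset.Ico a b) (hj : j ∈ Finset.Ico a b) :
    |(e (i + 1) - e i) - (e (j + 1) - e j)| ≤ tv2 e a b := by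
  rw [Finset.mem_Ico] at hi hj
  have h := abs_sub_le_sum_abs_sub (fun t => e (t + 1) - e t) (m := i) (n := j)
    (a := a) (b := b - 1) ⟨hi.1, by omega⟩ ⟨hj.1, by omega⟩
  refine h.trans ?_
  unfold tv2
  refine (Finset.sum_le_sum_of_subset_of_nonneg (t := Finset.Icc a (b - 2)) (fun t ht => ?_)
    fun _ _ _ => abs_nonneg _).trans_eq ?_
  · rw [Finset.mem_Ico] at ht
    rw [Finset.mem_Icc]
    omega
  · refine Finset.sum_congr rfl fun t _ => congrArg _ ?_
    ring

/-- A sequence orthogonal to all affine sequences is controlled by its second differences. -/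
theorem abs_le_mul_tv2_of_orthogonal {a b : ℕ} (hab : a < b) (e : ℕ → ℝ)
    (h0 : ∑ s ∈ Finset.Icc a b, e s = 0) (h1 : ∑ s ∈ Finset.Icc a b, (s : ℝ) * e s = 0)
    {t : ℕ} (ht : t ∈ Finset.Icc a b) :
    |e t| ≤ ((b : ℝ) - a) * tv2 e a b := by
  obtain ⟨i, hi, hi'⟩ := exists_succ_sub_nonpos_of_orthogonal hab e h0 h1
  obtain ⟨j, hj, hj'⟩ := exists_succ_sub_nonpos_of_orthogonal hab (fun s => -e s)
    (by simp [h0]) (by simp [h1])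
  have slope : ∀ s ∈ Finset.Ico a b, |e (s + 1) - e s| ≤ tv2 e a b := by
    intro s hs
    have hsi := abs_le.1 (abs_slope_sub_slope_le_tv2 e hs hi)
    have hsj := abs_le.1 (abs_slope_sub_slope_le_tv2 e hs hj)
    exact abs_le.2 ⟨by linarith, by linarith⟩
  have diff : ∀ s ∈ Finset.Icc a b, |e t - e s| ≤ ((b : ℝ) - a) * tv2 e a b := by
    intro s hs
    refine (abs_sub_le_sum_abs_sub e (Finset.mem_Icc.1 ht) (Finset.mem_Icc.1 hs)).trans
      ((Finset.sum_le_card_nsmul _ _ _ slope).trans_eq ?_)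
    rw [Nat.card_Ico, nsmul_eq_mul, Nat.cast_sub hab.le]
  have ne : (Finset.Icc a b).Nonempty := ⟨t, ht⟩
  obtain ⟨p, hp, hp'⟩ := Finset.exists_le_of_sum_le (f := e) (g := fun _ => 0) ne (by simp [h0])
  obtain ⟨q, hq, hq'⟩ := Finset.exists_le_of_sum_le (f := fun _ => 0) (g := e) ne (by simp [h0])
  have htp := abs_le.1 (diff p hp)
  have htq := abs_le.1 (diff q hq)
  exact abs_le.2 ⟨by linarith, by linarith⟩

theorem gram_det_pos {a b : ℕ} (hab : a < b) :
    0 < (∑ s ∈ Finset.Icc a b, Matrix.vecMulVec (xv a s) (xv a s)).det := by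
  have mono : StrictMonoOn (fun s : ℕ => (s : ℝ) - a + 1) (Set.Icc a b) := by
    intro s _ r _ h
    have h' : (s : ℝ) < r := Nat.cast_lt.2 h
    simpa using h'
  have pos := sum_sum_sub_mul_sub_pos hab mono mono
  rw [sum_sum_sub_mul_sub] at pos
  rw [Matrix.det_fin_two]
  simp only [Matrix.sum_apply, Matrix.vecMulVec_apply, xv, Matrix.cons_val_zero,
    Matrix.cons_val_one, one_mul, mul_one, Finset.sum_const, nsmul_eq_mul]
  linarith

theorem least_squares_normal_equations {a b : ℕ} (hab : a < b) (u : ℕ → ℝ) (β : Fin 2 → ℝ)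
    (hβ : β = ((∑ s ∈ Finset.Icc a b, Matrix.vecMulVec (xv a s) (xv a s))⁻¹).mulVec
        (∑ s ∈ Finset.Icc a b, u s • xv a s)) (k : Fin 2) :
    ∑ s ∈ Finset.Icc a b, xv a s k * ((∑ i, β i * xv a s i) - u s) = 0 := by
  have normal : (∑ s ∈ Finset.Icc a b, Matrix.vecMulVec (xv a s) (xv a s)).mulVec β =
      ∑ s ∈ Finset.Icc a b, u s • xv a s := by
    rw [hβ, Matrix.mulVec_mulVec, Matrix.mul_nonsing_inv _ (gram_det_pos hab).ne'.isUnit,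
      Matrix.one_mulVec]
  have hk := congrFun normal k
  simp only [Matrix.mulVec, dotProduct, Matrix.sum_apply, Matrix.vecMulVec_apply,
    Finset.sum_apply, Pi.smul_apply, smul_eq_mul, Fin.sum_univ_two, Finset.sum_mul,
    ← Finset.sum_add_distrib] at hk
  rw [← sub_eq_zero, ← Finset.sum_sub_distrib] at hk
  rw [← hk]
  refine Finset.sum_congr rfl fun s _ => ?_
  rw [Fin.sum_univ_two]
  ring

/-!
Lemma (least-squares residual bound).  Let `ℓ = b - a + 1 ≥ 6` and let
`β = (XᵀX)⁻¹ Xᵀ u_{a:b}` be the least-squares coefficient fitting the labels `u_t` against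
the covariates `x_t = [1, t - a + 1]ᵀ`.  Then every residual satisfies
`|βᵀ x_t - u_t| ≤ 20 ℓ ‖D² u_{a:b}‖₁`.
-/
theorem least_squares_residual_bound (a b : ℕ) (hab : a ≤ b) (hlen : 6 ≤ b - a + 1)
    (u : ℕ → ℝ) (β : Fin 2 → ℝ)
    (hβ : β = ((∑ s ∈ Finset.Icc a b, Matrix.vecMulVec (xv a s) (xv a s))⁻¹).mulVec
        (∑ s ∈ Finset.Icc a b, u s • xv a s)) :
    ∀ t ∈ Finset.Icc a b,
      |(∑ i, β i * xv a t i) - u t| ≤ 20 * ((b : ℝ) - (a : ℝ) + 1) * tv2 u a b := by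
  intro t ht
  have hlt : a < b := by omega
  set e : ℕ → ℝ := fun s => (∑ i, β i * xv a s i) - u s with he
  have h0 : ∑ s ∈ Finset.Icc a b, e s = 0 := by
    simpa [xv, he] using least_squares_normal_equations hlt u β hβ 0
  have h1 : ∑ s ∈ Finset.Icc a b, (s : ℝ) * e s = 0 := by
    have h : ∑ s ∈ Finset.Icc a b, ((s : ℝ) - a + 1) * e s = 0 := by
      simpa [xv, he] using least_squares_normal_equations hlt u β hβ 1
    calc ∑ s ∈ Finset.Icc a b, (s : ℝ) * e s
        = ∑ s ∈ Finset.Icc a b, (((s : ℝ) - a + 1) * e s + ((a : ℝ) - 1) * e s) :=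
          Finset.sum_congr rfl fun s _ => by ring
      _ = 0 := by rw [Finset.sum_add_distrib, ← Finset.mul_sum, h, h0]; simp
  have htv : tv2 e a b = tv2 u a b := by
    refine Finset.sum_congr rfl fun s _ => ?_
    rw [← abs_neg]
    congr 1
    simp only [he, xv, Fin.sum_univ_two, Matrix.cons_val_zero, Matrix.cons_val_one]
    push_cast
    ring
  have bound := abs_le_mul_tv2_of_orthogonal hlt e h0 h1 ht
  rw [htv] at bound
  refine bound.trans (mul_le_mul_of_nonneg_right ?_ (Finset.sum_nonneg fun _ _ => abs_nonneg _))
  have hab' : (a : ℝ) ≤ b := Nat.cast_le.2 hab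
  linarith
end

section
/- Lemma (endpoint slopes of the least-squares residual). Let a ≤ b be integers with ℓ = b − a + 1 ≥ 2, let u_a,…,u_b be real numbers, let x_t = [1, t − a + 1]ᵀ ∈ ℝ², X ∈ ℝ^{ℓ×2} the matrix with rows x_a,…,x_b, and β = (XᵀX)^{−1} Xᵀ u_{a:b} the least-squares coefficient. Define the residuals r_t = βᵀ x_t − u_t for t ∈ [a,b]. Then |r_{a+1} − r_a| ≤ ‖D² u_{a:b}‖₁ and |r_b − r_{b−1}| ≤ ‖D² u_{a:b}‖₁. -/
/-- The Gram matrix of the covariates over an interval with at least two points is nonsingular. -/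
lemma det_gram_xv_ne_zero {a b : ℕ} (hab : a < b) :
    (∑ s ∈ Finset.Icc a b, Matrix.vecMulVec (xv a s) (xv a s)).det ≠ 0 := by
  intro h
  obtain ⟨v, hv, hMv⟩ := Matrix.exists_mulVec_eq_zero_iff.mpr h
  have hq : ∑ s ∈ Finset.Icc a b, (xv a s ⬝ᵥ v) ^ 2 = 0 := by
    rw [Matrix.sum_mulVec] at hMv
    have h0 := congrArg (fun w => v ⬝ᵥ w) hMv
    simp only [dotProduct_sum, Matrix.vecMulVec_mulVec, dotProduct_zero] at h0
    rw [← h0]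
    refine Finset.sum_congr rfl fun s _ => ?_
    simp only [dotProduct, Fin.sum_univ_two, Pi.smul_apply, MulOpposite.smul_eq_mul_unop,
      MulOpposite.unop_op]
    ring
  rw [Finset.sum_eq_zero_iff_of_nonneg fun s _ => sq_nonneg _] at hq
  have ha := hq a (Finset.mem_Icc.mpr ⟨le_rfl, hab.le⟩)
  have ha' := hq (a + 1) (Finset.mem_Icc.mpr ⟨by omega, hab⟩)
  simp [xv, dotProduct, Fin.sum_univ_two] at ha ha'
  apply hv
  ext i
  fin_cases i <;> simp <;> linarith

/-- Least-squares residuals are orthogonal to the covariates. -/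
lemma sum_residual_mul_xv_eq_zero {a b : ℕ} (hab : a < b) {u : ℕ → ℝ} {β : Fin 2 → ℝ}
    (hβ : β = ((∑ s ∈ Finset.Icc a b, Matrix.vecMulVec (xv a s) (xv a s))⁻¹).mulVec
        (∑ s ∈ Finset.Icc a b, u s • xv a s)) (j : Fin 2) :
    ∑ s ∈ Finset.Icc a b, ((∑ i, β i * xv a s i) - u s) * xv a s j = 0 := by
  have h : (∑ s ∈ Finset.Icc a b, Matrix.vecMulVec (xv a s) (xv a s)).mulVec β
      = ∑ s ∈ Finset.Icc a b, u s • xv a s := by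
    rw [hβ, Matrix.mulVec_mulVec, Matrix.mul_nonsing_inv _ (det_gram_xv_ne_zero hab).isUnit,
      Matrix.one_mulVec]
  have hj := congrFun h j
  rw [Matrix.sum_mulVec, Finset.sum_apply, Finset.sum_apply, ← sub_eq_zero,
    ← Finset.sum_sub_distrib] at hj
  rw [← hj]
  refine Finset.sum_congr rfl fun s _ => ?_
  simp only [Matrix.vecMulVec_mulVec, dotProduct, Fin.sum_univ_two, Pi.smul_apply,
    MulOpposite.smul_eq_mul_unop, MulOpposite.unop_op, smul_eq_mul]
  ring

/-- A sequence orthogonal to all affine sequences has a nonpositive increment. -/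
lemma exists_increment_nonpos {a b : ℕ} (hab : a < b) {r : ℕ → ℝ}
    (h0 : ∑ s ∈ Finset.Icc a b, r s = 0) (h1 : ∑ s ∈ Finset.Icc a b, r s * s = 0) :
    ∃ t, a ≤ t ∧ t < b ∧ r (t + 1) - r t ≤ 0 := by
  by_contra! hpos
  have hmono : ∀ s t, a ≤ s → s < t → t ≤ b → r s < r t := by
    intro s t has hst
    induction t, hst using Nat.le_induction with
    | base => intro hb; linarith [hpos s has hb]
    | succ t hst ih => intro hb; linarith [hpos t (by omega) hb, ih (by omega)]
  have hnonneg : ∀ s ∈ Finset.Icc a b, ∀ t ∈ Finset.Icc a b,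
      0 ≤ (r s - r t) * ((s : ℝ) - t) := by
    intro s hs t ht
    rw [Finset.mem_Icc] at hs ht
    rcases lt_trichotomy s t with h | rfl | h
    · have hc : (s : ℝ) < t := by exact_mod_cast h
      nlinarith [hmono s t hs.1 h ht.2]
    · simp
    · have hc : (t : ℝ) < s := by exact_mod_cast h
      nlinarith [hmono t s ht.1 h hs.2]
  have hsum : ∑ s ∈ Finset.Icc a b, ∑ t ∈ Finset.Icc a b, (r s - r t) * ((s : ℝ) - t) = 0 := by
    have hrow : ∀ s : ℕ, ∑ t ∈ Finset.Icc a b, (r s - r t) * ((s : ℝ) - t)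
        = (Finset.Icc a b).card * (r s * s) - r s * ∑ t ∈ Finset.Icc a b, (t : ℝ) := by
      intro s
      have hterm : ∀ t : ℕ, (r s - r t) * ((s : ℝ) - t)
          = r s * s - r s * t - (s * r t - r t * t) := fun t => by ring
      simp only [hterm, Finset.sum_sub_distrib, ← Finset.mul_sum, h0, h1, Finset.sum_const,
        nsmul_eq_mul]
      ring
    simp only [hrow, Finset.sum_sub_distrib, ← Finset.mul_sum, ← Finset.sum_mul, h0, h1]
    ring
  have ha : a ∈ Finset.Icc a b := Finset.mem_Icc.mpr ⟨le_rfl, hab.le⟩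
  have hb : b ∈ Finset.Icc a b := Finset.mem_Icc.mpr ⟨hab.le, le_rfl⟩
  rw [Finset.sum_eq_zero_iff_of_nonneg fun s hs => Finset.sum_nonneg (hnonneg s hs)] at hsum
  have hrow := hsum b hb
  rw [Finset.sum_eq_zero_iff_of_nonneg (hnonneg b hb)] at hrow
  have hr := hmono a b le_rfl hab le_rfl
  have hc : (a : ℝ) < b := by exact_mod_cast hab
  exact (mul_pos (sub_pos.mpr hr) (sub_pos.mpr hc)).ne' (hrow a ha)

/-- Increments of `r` on `[a, b]` differ by at most `tv2 u a b` when `r + u` is affine. -/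
lemma abs_increment_sub_le_tv2 {a b : ℕ} {u r : ℕ → ℝ}
    (hD : ∀ t, r (t + 2) - 2 * r (t + 1) + r t = -(u (t + 2) - 2 * u (t + 1) + u t))
    {s t : ℕ} (has : a ≤ s) (hst : s ≤ t) (htb : t < b) :
    |(r (s + 1) - r s) - (r (t + 1) - r t)| ≤ tv2 u a b := by
  have h := dist_le_Ico_sum_dist (fun k => r (k + 1) - r k) hst
  rw [Real.dist_eq] at h
  refine h.trans ?_
  have hterm : ∀ k, dist (r (k + 1) - r k) (r (k + 1 + 1) - r (k + 1))
      = |u (k + 2) - 2 * u (k + 1) + u k| := by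
    intro k
    rw [Real.dist_eq]
    congr 1
    linarith [hD k]
  simp only [hterm, tv2]
  refine Finset.sum_le_sum_of_subset_of_nonneg (fun k hk => ?_) fun _ _ _ => abs_nonneg _
  rw [Finset.mem_Ico] at hk
  rw [Finset.mem_Icc]
  omega

/-!
Lemma (endpoint slopes of the least-squares residual).  With `ℓ = b - a + 1 ≥ 2` and
`β = (XᵀX)⁻¹ Xᵀ u_{a:b}` the least-squares coefficient, the residuals
`r_t = βᵀ x_t - u_t` satisfy `|r_{a+1} - r_a| ≤ ‖D² u_{a:b}‖₁` and
`|r_b - r_{b-1}| ≤ ‖D² u_{a:b}‖₁`.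
-/
theorem least_squares_residual_endpoint_slopes (a b : ℕ) (hab : a ≤ b)
    (hlen : 2 ≤ b - a + 1)
    (u : ℕ → ℝ) (β : Fin 2 → ℝ)
    (hβ : β = ((∑ s ∈ Finset.Icc a b, Matrix.vecMulVec (xv a s) (xv a s))⁻¹).mulVec
        (∑ s ∈ Finset.Icc a b, u s • xv a s))
    (r : ℕ → ℝ) (hr : ∀ t, r t = (∑ i, β i * xv a t i) - u t) :
    |r (a + 1) - r a| ≤ tv2 u a b ∧ |r b - r (b - 1)| ≤ tv2 u a b := by
  have hlt : a < b := by omega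
  have horth := sum_residual_mul_xv_eq_zero hlt hβ
  simp only [← hr] at horth
  have h0 : ∑ s ∈ Finset.Icc a b, r s = 0 := by simpa [xv] using horth 0
  have h1 : ∑ s ∈ Finset.Icc a b, r s * s = 0 := by
    have hterm : ∀ s : ℕ, r s * xv a s 1 = r s * s - r s * (a - 1) := fun s => by
      simp only [xv, Matrix.cons_val_one, Matrix.cons_val_fin_one]
      ring
    simpa [hterm, ← Finset.sum_mul, h0] using horth 1
  have hD : ∀ t, r (t + 2) - 2 * r (t + 1) + r t = -(u (t + 2) - 2 * u (t + 1) + u t) := by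
    intro t
    simp only [hr, xv, Fin.sum_univ_two, Matrix.cons_val_zero, Matrix.cons_val_one,
      Matrix.cons_val_fin_one]
    push_cast
    ring
  obtain ⟨s, has, hsb, hs⟩ := exists_increment_nonpos hlt h0 h1
  obtain ⟨t, hat, htb, ht⟩ := exists_increment_nonpos (r := fun k => -r k) hlt
    (by simp [h0]) (by simp [h1])
  have hleft : ∀ k, a ≤ k → k < b →
      |(r (a + 1) - r a) - (r (k + 1) - r k)| ≤ tv2 u a b :=
    fun k hak hkb => abs_increment_sub_le_tv2 hD le_rfl hak hkb
  have hright : ∀ k, a ≤ k → k < b →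
      |(r (k + 1) - r k) - (r b - r (b - 1))| ≤ tv2 u a b := by
    intro k hak hkb
    have h := abs_increment_sub_le_tv2 hD hak (show k ≤ b - 1 by omega)
      (show b - 1 < b by omega)
    rwa [show b - 1 + 1 = b by omega] at h
  have hls := abs_le.mp (hleft s has hsb)
  have hlt' := abs_le.mp (hleft t hat htb)
  have hrs := abs_le.mp (hright s has hsb)
  have hrt := abs_le.mp (hright t hat htb)
  exact ⟨abs_le.mpr ⟨by linarith, by linarith⟩, abs_le.mpr ⟨by linarith, by linarith⟩⟩
end

section
/- Lemma (a low-TV¹ sequence touching one boundary stays away from the other). Let ℓ ≥ 1 and let w_1,…,w_ℓ ∈ [−1,1] satisfy ‖D² w_{1:ℓ}‖₁ ≤ ℓ^{−3/2}. If w_r = −1 for some index r with 2 ≤ r ≤ ℓ, then w_s ≤ −1 + ℓ^{−1/2} for all s with r ≤ s ≤ ℓ; in particular w_s < 1 for all s ≥ r. Symmetrically, if w_r = 1 for some 2 ≤ r ≤ ℓ, then w_s ≥ 1 − ℓ^{−1/2} for all r ≤ s ≤ ℓ. -/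
/-- If a sequence does not increase from `p` to `p + 1`, a later increment is at most the
`ℓ¹` norm of the second differences in between. -/
theorem sub_le_sum_abs_second_difference (w : ℕ → ℝ) {p t : ℕ} (hp : w (p + 1) ≤ w p)
    (hpt : p ≤ t) :
    w (t + 1) - w t ≤ ∑ j ∈ Finset.Ico p t, |w (j + 2) - 2 * w (j + 1) + w j| := by
  induction t, hpt using Nat.le_induction with
  | base => simpa using hp
  | succ t hpt ih =>
    rw [Finset.sum_Ico_succ_top hpt]
    have := le_abs_self (w (t + 2) - 2 * w (t + 1) + w t)
    linarith

/-- If all increments on `[r, s)` are at most `ε`, then `w` grows by at most `(s - r) ε`. -/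
theorem le_add_mul_of_sub_le (w : ℕ → ℝ) {ε : ℝ} {r s : ℕ} (hrs : r ≤ s)
    (h : ∀ t, r ≤ t → t < s → w (t + 1) - w t ≤ ε) :
    w s ≤ w r + ((s : ℝ) - r) * ε := by
  induction s, hrs using Nat.le_induction with
  | base => simp
  | succ s hrs ih =>
    have h₁ := ih fun t ht hts => h t ht (by omega)
    have h₂ := h s hrs (by omega)
    push_cast
    linarith

/-- A sequence with small second differences that touches a lower bound `w r` from the left
stays within `ℓ ^ (-1/2)` of it. -/
theorem le_add_rpow_of_low_tv (ℓ : ℕ) (w : ℕ → ℝ)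
    (htv : (∑ t ∈ Finset.Icc 1 (ℓ - 2), |w (t + 2) - 2 * w (t + 1) + w t|)
        ≤ (ℓ : ℝ) ^ (-(3 : ℝ) / 2))
    {r s : ℕ} (hr : 2 ≤ r) (hdec : w r ≤ w (r - 1)) (hrs : r ≤ s) (hs : s ≤ ℓ) :
    w s ≤ w r + (ℓ : ℝ) ^ (-(1 : ℝ) / 2) := by
  have hℓ : (0 : ℝ) < ℓ := by exact_mod_cast (by omega : 0 < ℓ)
  have hinc : ∀ t, r ≤ t → t < s → w (t + 1) - w t ≤ (ℓ : ℝ) ^ (-(3 : ℝ) / 2) := by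
    intro t ht hts
    refine (sub_le_sum_abs_second_difference w (p := r - 1) ?_ (by omega)).trans
      ((Finset.sum_le_sum_of_subset_of_nonneg ?_ fun _ _ _ => abs_nonneg _).trans htv)
    · rwa [Nat.sub_add_cancel (by omega)]
    · intro j hj
      simp only [Finset.mem_Ico, Finset.mem_Icc] at hj ⊢
      omega
  have hgrow := le_add_mul_of_sub_le w hrs hinc
  have hpow : (ℓ : ℝ) * (ℓ : ℝ) ^ (-(3 : ℝ) / 2) = (ℓ : ℝ) ^ (-(1 : ℝ) / 2) := by
    rw [← Real.rpow_one_add' hℓ.le (by norm_num)]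
    norm_num
  have hlen : (s : ℝ) - r ≤ ℓ := by
    have : (s : ℝ) ≤ ℓ := by exact_mod_cast hs
    have : (0 : ℝ) ≤ r := r.cast_nonneg
    linarith
  have := mul_le_mul_of_nonneg_right hlen (Real.rpow_nonneg hℓ.le (-(3 : ℝ) / 2))
  linarith

/-!
Lemma (a low-TV¹ sequence touching one boundary stays away from the other).
If `w_1, …, w_ℓ ∈ [-1,1]` has `‖D² w_{1:ℓ}‖₁ ≤ ℓ^{-3/2}` and `w_r = -1` for some
`2 ≤ r ≤ ℓ`, then `w_s ≤ -1 + ℓ^{-1/2}` (hence `w_s < 1`) for all `r ≤ s ≤ ℓ`;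
symmetrically for touching `1`.
-/
theorem low_tv1_one_boundary (ℓ : ℕ) (hℓ : 1 ≤ ℓ) (w : ℕ → ℝ)
    (hbox : ∀ t ∈ Finset.Icc 1 ℓ, w t ∈ Set.Icc (-1 : ℝ) 1)
    (htv : (∑ t ∈ Finset.Icc 1 (ℓ - 2), |w (t + 2) - 2 * w (t + 1) + w t|)
        ≤ (ℓ : ℝ) ^ (-(3 : ℝ) / 2)) :
    (∀ r, 2 ≤ r → r ≤ ℓ → w r = -1 →
      ∀ s, r ≤ s → s ≤ ℓ → w s ≤ -1 + (ℓ : ℝ) ^ (-(1 : ℝ) / 2) ∧ w s < 1) ∧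
    (∀ r, 2 ≤ r → r ≤ ℓ → w r = 1 →
      ∀ s, r ≤ s → s ≤ ℓ → 1 - (ℓ : ℝ) ^ (-(1 : ℝ) / 2) ≤ w s) := by
  refine ⟨fun r hr hrl hw s hrs hs => ?_, fun r hr hrl hw s hrs hs => ?_⟩
  · have hprev := (hbox (r - 1) (Finset.mem_Icc.2 (by omega))).1
    have hle := le_add_rpow_of_low_tv ℓ w htv hr (by rwa [hw]) hrs hs
    rw [hw] at hle
    have hone : (ℓ : ℝ) ^ (-(1 : ℝ) / 2) ≤ 1 :=
      Real.rpow_le_one_of_one_le_of_nonpos (by exact_mod_cast hℓ) (by norm_num)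
    exact ⟨hle, by linarith⟩
  · have hprev := (hbox (r - 1) (Finset.mem_Icc.2 (by omega))).2
    have htv' : (∑ t ∈ Finset.Icc 1 (ℓ - 2), |-w (t + 2) - 2 * -w (t + 1) + -w t|)
        ≤ (ℓ : ℝ) ^ (-(3 : ℝ) / 2) := by
      refine le_of_eq_of_le (Finset.sum_congr rfl fun t _ => ?_) htv
      rw [← abs_neg]
      ring_nf
    have hle := le_add_rpow_of_low_tv ℓ (fun t => -w t) htv' hr (by simpa [hw] using hprev) hrs hs
    simp only [hw] at hle
    linarith
end

section
/- Proposition (embedding of TV¹ into TV⁰). Let w_1,…,w_n ∈ [−1,1]^d be a sequence with n·‖D² w_{1:n}‖₁ ≤ C_n. Then Σ_{t=1}^{n−1} ‖w_{t+1} − w_t‖₁ ≤ 2 C_n + 20 d. Equivalently, TV^{(1)}(C_n) ⊆ TV^{(0)}(2C_n + 20d) whenever the benchmark set satisfies W ⊆ [−1,1]^d. -/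
/-- Any two values of a real sequence on `[1, m]` differ by at most its total variation there. -/
lemma abs_sub_le_totalVariation (u : ℕ → ℝ) (m : ℕ) {s t : ℕ}
    (hs : s ∈ Finset.Icc 1 m) (ht : t ∈ Finset.Icc 1 m) :
    |u t - u s| ≤ ∑ i ∈ Finset.Icc 1 (m - 1), |u (i + 1) - u i| := by
  wlog hst : s ≤ t generalizing s t
  · rw [abs_sub_comm]
    exact this ht hs (by omega)
  rw [Finset.mem_Icc] at hs ht
  calc |u t - u s| ≤ ∑ i ∈ Finset.Ico s t, |u (i + 1) - u i| := by
        simpa only [Real.dist_eq, abs_sub_comm] using dist_le_Ico_sum_dist u hst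
    _ ≤ _ := Finset.sum_le_sum_of_subset_of_nonneg
        (fun i hi => by rw [Finset.mem_Ico] at hi; rw [Finset.mem_Icc]; omega)
        (fun _ _ _ => abs_nonneg _)

/-- The `ℓ¹` norm of a finite real sequence is at most the absolute value of its sum plus its
length times its total variation. -/
lemma sum_abs_le_abs_sum_add_mul_totalVariation (u : ℕ → ℝ) (m : ℕ) :
    ∑ t ∈ Finset.Icc 1 m, |u t| ≤ |∑ t ∈ Finset.Icc 1 m, u t| +
      m * ∑ t ∈ Finset.Icc 1 (m - 1), |u (t + 1) - u t| := by
  rcases Nat.eq_zero_or_pos m with rfl | hm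
  · simp
  set V := ∑ t ∈ Finset.Icc 1 (m - 1), |u (t + 1) - u t|
  have hpoint : ∀ t ∈ Finset.Icc 1 m,
      m * |u t| ≤ |∑ s ∈ Finset.Icc 1 m, u s| + m * V := by
    intro t ht
    have hsplit : (m : ℝ) * u t =
        ∑ s ∈ Finset.Icc 1 m, u s + ∑ s ∈ Finset.Icc 1 m, (u t - u s) := by
      simp [Finset.sum_sub_distrib]
    have hdev : |∑ s ∈ Finset.Icc 1 m, (u t - u s)| ≤ m * V := by
      refine (Finset.abs_sum_le_sum_abs _ _).trans ?_
      refine (Finset.sum_le_card_nsmul _ _ V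
        fun s hs => abs_sub_le_totalVariation u m hs ht).trans ?_
      simp
    calc (m : ℝ) * |u t| = |(m : ℝ) * u t| := by rw [abs_mul, Nat.abs_cast]
      _ ≤ _ := by
        rw [hsplit]
        exact (abs_add_le _ _).trans (by gcongr)
  have hsum := Finset.sum_le_card_nsmul _ _ _ hpoint
  rw [← Finset.mul_sum, Nat.card_Icc, Nat.add_sub_cancel, nsmul_eq_mul] at hsum
  exact le_of_mul_le_mul_left hsum (by exact_mod_cast hm)

/-- A real sequence of length `n` bounded by `1` has total variation at most `2` plus `n` times
the `ℓ¹` norm of its second differences. -/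
lemma totalVariation_le_two_add_mul_sum_abs_second_diff (n : ℕ) (hn : 1 ≤ n) (f : ℕ → ℝ)
    (hf : ∀ t ∈ Finset.Icc 1 n, |f t| ≤ 1) :
    ∑ t ∈ Finset.Icc 1 (n - 1), |f (t + 1) - f t| ≤
      2 + n * ∑ t ∈ Finset.Icc 1 (n - 2), |f (t + 2) - 2 * f (t + 1) + f t| := by
  have hmain := sum_abs_le_abs_sum_add_mul_totalVariation (fun t => f (t + 1) - f t) (n - 1)
  have htel : ∑ t ∈ Finset.Icc 1 (n - 1), (f (t + 1) - f t) = f n - f 1 := by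
    have hIcc : Finset.Icc 1 (n - 1) = Finset.Ico 1 n := by
      ext t
      simp only [Finset.mem_Icc, Finset.mem_Ico]
      omega
    rw [hIcc, Finset.sum_Ico_sub f hn]
  have hsecond : ∀ t, f (t + 1 + 1) - f (t + 1) - (f (t + 1) - f t) =
      f (t + 2) - 2 * f (t + 1) + f t := fun t => by ring
  simp only [htel, hsecond, Nat.sub_sub, Nat.reduceAdd] at hmain
  have hends : |f n - f 1| ≤ 2 := by
    have h1 := hf 1 (Finset.mem_Icc.2 ⟨le_rfl, hn⟩)
    have h2 := hf n (Finset.mem_Icc.2 ⟨hn, le_rfl⟩)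
    linarith [abs_sub (f n) (f 1)]
  refine hmain.trans (add_le_add hends ?_)
  gcongr
  exact Nat.sub_le n 1

/-!
Proposition (embedding of TV¹ into TV⁰).
If `w_1, …, w_n ∈ [-1,1]^d` satisfies `n · ‖D² w_{1:n}‖₁ ≤ C_n`, then
`Σ_{t=1}^{n-1} ‖w_{t+1} - w_t‖₁ ≤ 2 C_n + 20 d`.
-/
theorem tv1_embeds_into_tv0 (d n : ℕ) (hd : 1 ≤ d) (hn : 1 ≤ n)
    (w : ℕ → Fin d → ℝ) (Cn : ℝ)
    (hbox : ∀ t ∈ Finset.Icc 1 n, ∀ k, |w t k| ≤ 1)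
    (htv1 : (n : ℝ) *
        (∑ t ∈ Finset.Icc 1 (n - 2), ∑ k, |w (t + 2) k - 2 * w (t + 1) k + w t k|) ≤ Cn) :
    (∑ t ∈ Finset.Icc 1 (n - 1), ∑ k, |w (t + 1) k - w t k|) ≤ 2 * Cn + 20 * d := by
  have hnonneg : 0 ≤ Cn := le_trans (by positivity) htv1
  have hdim : (0 : ℝ) ≤ d := Nat.cast_nonneg d
  rw [Finset.sum_comm] at htv1 ⊢
  have hsum := Finset.sum_le_sum fun k (_ : k ∈ Finset.univ) =>
    totalVariation_le_two_add_mul_sum_abs_second_diff n hn (fun t => w t k)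
      (fun t ht => hbox t ht k)
  rw [Finset.sum_add_distrib, ← Finset.mul_sum, Finset.sum_const, Finset.card_univ,
    Fintype.card_fin, nsmul_eq_mul] at hsum
  linarith
end

section
/- Claim (linear regret of OGD with large step size). Let the decision set be D = [−1,1] ⊂ ℝ, let y_t = −1 for odd t and y_t = 1 for even t, and let the losses be f_t(x) = (x − y_t)²/2. Consider projected online gradient descent with step size η ≥ 1: w_1 = 0 and w_{t+1} = clip_{[−1,1]}(w_t − η(w_t − y_t)), where clip_{[−1,1]}(z) = max(−1, min(1, z)). Then w_2 = −1 and the iterates alternate w_t = (−1)^t for t ≥ 2, and for every n ≥ 2 the static regret against the fixed comparator 0 satisfies Σ_{t=1}^n ( f_t(w_t) − f_t(0) ) ≥ 3n/4. -/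
/-!
Claim: linear regret of projected OGD with step size `η ≥ 1` on the decision set `[-1,1]`,
against the alternating labels `y_t = -1` (t odd), `y_t = 1` (t even), with losses
`f_t(x) = (x - y_t)²/2`.  The iterates alternate (`w_2 = -1`, then alternating sign),
and the static regret against the fixed comparator `0` is at least `3n/4` for all `n ≥ 2`.
-/
theorem ogd_large_step_linear_regret (η : ℝ) (hη : 1 ≤ η)
    (y : ℕ → ℝ) (hy : ∀ t, y t = if Odd t then -1 else 1)
    (w : ℕ → ℝ) (hw1 : w 1 = 0)
    (hrec : ∀ t, 1 ≤ t → w (t + 1) = max (-1) (min 1 (w t - η * (w t - y t)))) :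
    w 2 = -1 ∧ (∀ t, 2 ≤ t → w t = (-1 : ℝ) ^ (t + 1)) ∧
      ∀ n : ℕ, 2 ≤ n →
        (3 * (n : ℝ)) / 4 ≤
          ∑ t ∈ Finset.Icc 1 n, ((w t - y t) ^ 2 / 2 - ((0 : ℝ) - y t) ^ 2 / 2) := by
  have hy_pow : ∀ t, y t = (-1 : ℝ) ^ t := by
    intro t
    rw [hy t]
    split_ifs with h
    · exact h.neg_one_pow.symm
    · exact (Nat.not_odd_iff_even.mp h).neg_one_pow.symm
  have hw2 : w 2 = -1 := by
    rw [hrec 1 le_rfl, hw1, hy_pow 1, max_eq_left]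
    exact min_le_of_right_le (by linarith)
  have hw : ∀ t, 2 ≤ t → w t = (-1 : ℝ) ^ (t + 1) := by
    intro t ht
    induction t, ht using Nat.le_induction with
    | base => rw [hw2]; norm_num
    | succ t ht ih =>
      rw [hrec t (by omega), ih, hy_pow t]
      rcases neg_one_pow_eq_or ℝ t with h | h
      · simp only [pow_succ, h]
        rw [min_eq_left (by linarith)]
        norm_num
      · simp only [pow_succ, h]
        rw [max_eq_left (min_le_of_right_le (by linarith))]
        norm_num
  have hregret : ∀ n : ℕ, 1 ≤ n →
      ∑ t ∈ Finset.Icc 1 n, ((w t - y t) ^ 2 / 2 - ((0 : ℝ) - y t) ^ 2 / 2)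
        = 3 / 2 * ((n : ℝ) - 1) := by
    intro n hn
    induction n, hn using Nat.le_induction with
    | base => simp [hw1]
    | succ n hn ih =>
      rw [Finset.sum_Icc_succ_top (by omega), ih, hw (n + 1) (by omega), hy_pow (n + 1)]
      rcases neg_one_pow_eq_or ℝ n with h | h <;>
        · simp only [pow_succ (-1 : ℝ), h]
          push_cast
          ring
  refine ⟨hw2, hw, fun n hn => ?_⟩
  have hn' : (2 : ℝ) ≤ n := by exact_mod_cast hn
  rw [hregret n (by omega)]
  linarith
end
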